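/- Let (G=(V,E),(J_v),(O_v),(T_{vu})) be a simple GIFS satisfying the bounded distortion condition (G.7)_B and the contractibility condition (G.9)_J (with no connectivity assumption on G). Then dim_H K ≤ max(s̄, c*), where s̄ := inf{s ≥ 0 : P(sφ) ≤ 0} and c* := inf{s ≥ 0 : Σ_{v∈V} sup_{u: vu∈E} sup_{x∈K∩J_u} ‖T′_{vu}(x)‖^s < ∞}. -/

import Mathlib

/-!
For `D = 0` the limit set is a subsingleton. For `D ≥ 1` already `dim_H K ≤ s̄` holds: if
`P(s₀φ) ≤ 0` and `s > s₀`, then the `s`-dimensional Hausdorff measure of `K` is finite.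

The covers are the pieces `π[w]`, `w` a word of length `n + 1`. Each `π[w]` lies in
`T_{w₀w₁} ∘ ⋯ ∘ T_{w_{n-1}w_n} (J_{w_n})`, and its diameter is at most a constant times
`exp (sup_{[w]} S_{n+1} φ)` (`exists_piece_bound`), for three reasons.

* Neither `J_v` nor `O_v` is convex, but `J_v` is connected, of bounded diameter, and surrounded
  by a uniform margin in `O_v`; hence a derivative bound `K` on the balls of that radius gives an
  oscillation at most `M * K * diam J_v` over `J_v` (`exists_lipschitz_const`).
* By bounded distortion and the exponential contraction of orbits, the derivative of the
  composition is comparable with `exp (S_n φ)` (`exists_distortion_const`).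
* By contractibility, `diam J_{w_n}` supplies the `(n+1)`-st factor. Since `J_v` has positive
  diameter, contractibility also rules out vertices without outgoing edges, so the edge nearly
  realising the supremum extends to an infinite code (`exists_edge_of_contractible`).

Summing, the pieces satisfy `∑ diam ^ s ≤ C ^ s * Z_{n+1}(sφ)`, and
`Z_n(sφ) ≤ r ^ ((s - s₀) n) * Z_n(s₀φ)` is eventually at most `1` because `P(s₀φ) ≤ 0` and `r < 1`.
-/

open scoped ENNReal NNReal Topology
open Filter Set Metric

noncomputable section

/-- The shift transformation on one-sided sequences. -/
def shift {S : Type*} (ω : ℕ → S) : ℕ → S := fun n => ω (n + 1)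

/-- The topological Markov shift with transition `A`. -/
def TMS {S : Type*} (A : S → S → Prop) : Set (ℕ → S) := {ω | ∀ n, A (ω n) (ω (n + 1))}

/-- The cylinder set of a word `w` inside the TMS with transition `A`. -/
def cylSet {S : Type*} (A : S → S → Prop) (n : ℕ) (w : Fin n → S) : Set (ℕ → S) :=
  {ω | ω ∈ TMS A ∧ ∀ i : Fin n, ω i = w i}

/-- Birkhoff sum `S_n f`. -/
def birkhoff {S : Type*} (f : (ℕ → S) → ℝ) (n : ℕ) (ω : ℕ → S) : ℝ :=
  ∑ i ∈ Finset.range n, f (shift^[i] ω)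

/-- Partition function `Z_n(f) = Σ_w sup_{ω ∈ [w]} exp (S_n f ω)`
(the supremum of `exp` coincides with `exp` of the supremum; empty cylinders contribute `0`). -/
def pressureZ {S : Type*} (A : S → S → Prop) (f : (ℕ → S) → ℝ) (n : ℕ) : ℝ≥0∞ :=
  ∑' w : Fin n → S, ⨆ ω ∈ cylSet A n w, ENNReal.ofReal (Real.exp (birkhoff f n ω))

/-- Logarithm `ℝ≥0∞ → EReal`, with `log 0 = ⊥` and `log ⊤ = ⊤`. -/
def elog (x : ℝ≥0∞) : EReal :=
  if x = 0 then ⊥ else if x = ⊤ then ⊤ else ((Real.log x.toReal : ℝ) : EReal)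

/-- The topological pressure `P(f) = lim (1/n) log Z_n(f)` (as a limsup, which equals the
limit whenever the limit exists). -/
def pressure {S : Type*} (A : S → S → Prop) (f : (ℕ → S) → ℝ) : EReal :=
  Filter.limsup (fun n : ℕ => ((n : ℝ)⁻¹ : EReal) * elog (pressureZ A f n)) Filter.atTop

/-- A potential is summable if `Σ_s exp (sup_{[s]} f) < ∞`. -/
def SummablePot {S : Type*} (A : S → S → Prop) (f : (ℕ → S) → ℝ) : Prop :=
  pressureZ A f 1 ≠ ⊤

/-- There is an `A`-admissible word of length `≥ 2` from `a` to `b`. -/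
def Chain {S : Type*} (A : S → S → Prop) (a b : S) : Prop :=
  ∃ (m : ℕ) (w : ℕ → S), 1 ≤ m ∧ w 0 = a ∧ w m = b ∧ ∀ i < m, A (w i) (w (i + 1))

/-- Restriction of a transition matrix to a set of states. -/
def restrictT {S : Type*} (A : S → S → Prop) (C : Set S) : S → S → Prop :=
  fun i j => A i j ∧ i ∈ C ∧ j ∈ C

/-- The communication class (the class of `a` under `↔`). -/
def commClass {S : Type*} (A : S → S → Prop) (a : S) : Set S :=
  {b | a = b ∨ (Chain A a b ∧ Chain A b a)}

end
noncomputable section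

/-- The ambient Euclidean space `ℝ^D`. -/
abbrev Pt (D : ℕ) := EuclideanSpace ℝ (Fin D)

/-- `‖A‖_i = ‖A⁻¹‖⁻¹` for an invertible continuous linear map (junk value otherwise). -/
def inorm {D : ℕ} (A : Pt D →L[ℝ] Pt D) : ℝ := ‖Ring.inverse A‖⁻¹

/-- A simple graph-directed iterated function system (GIFS) in `ℝ^D` on the vertex set `V`,
with edge relation `E`, seed sets `J`, open sets `O` and contractions `T`. -/
structure SGIFS (D : ℕ) (V : Type*) where
  E : V → V → Prop
  J : V → Set (Pt D)
  O : V → Set (Pt D)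
  T : V → V → Pt D → Pt D
  r : ℝ
  hr : r < 1
  J_cpt : ∀ v, IsCompact (J v)
  J_conn : ∀ v, IsConnected (J v)
  J_reg : ∀ v, J v = closure (interior (J v))
  J_diam : ∃ c : ℝ, ∀ v, Metric.diam (J v) ≤ c
  O_open : ∀ v, IsOpen (O v)
  O_bdd : ∀ v, Bornology.IsBounded (O v)
  O_conn : ∀ v, IsConnected (O v)
  hJO : ∃ c > 0, ∀ v, ∀ x ∈ J v, ∀ y ∉ O v, c ≤ dist x y
  T_diff : ∀ ⦃v u⦄, E v u → ContDiffOn ℝ 1 (T v u) (O u)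
  T_inj : ∀ ⦃v u⦄, E v u → Set.InjOn (T v u) (O u)
  T_openim : ∀ ⦃v u⦄, E v u → IsOpen (T v u '' O u)
  T_sub : ∀ ⦃v u⦄, E v u → T v u '' O u ⊆ O v
  T_J : ∀ ⦃v u⦄, E v u → T v u '' J u ⊆ J v
  T_unit : ∀ ⦃v u⦄, E v u → ∀ x ∈ O u, IsUnit (fderiv ℝ (T v u) x)
  T_contr : ∀ ⦃v u⦄, E v u → ∀ x ∈ O u, ‖fderiv ℝ (T v u) x‖ ≤ r

/-- Composition `T_{ω₀ω₁} ∘ ⋯ ∘ T_{ω_{k-1}ω_k}` along a sequence (identity for `k = 0`). -/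
def vcomp {D : ℕ} {V : Type*} (T : V → V → Pt D → Pt D) (ω : ℕ → V) : ℕ → Pt D → Pt D
  | 0 => id
  | k + 1 => vcomp T ω k ∘ T (ω k) (ω (k + 1))

/-- `π` is the coding map of the simple system `(Ed, J, T)`:
`{π ω} = ⋂_{k ≥ 1} T_{ω₀ω₁} ∘ ⋯ ∘ T_{ω_{k-1}ω_k} (J_{ω_k})`. -/
def IsCodingMap {D : ℕ} {V : Type*} (Ed : V → V → Prop) (J : V → Set (Pt D))
    (T : V → V → Pt D → Pt D) (π : (ℕ → V) → Pt D) : Prop :=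
  ∀ ω ∈ {ω : ℕ → V | ∀ n, Ed (ω n) (ω (n + 1))},
    (⋂ k : ℕ, vcomp T ω (k + 1) '' J (ω (k + 1))) = {π ω}

/-- `pcomp T w j m = T_{w_j w_{j+1}} ∘ ⋯ ∘ T_{w_{j+m-1} w_{j+m}}` (identity for `m = 0`). -/
def pcomp {D : ℕ} {V : Type*} (T : V → V → Pt D → Pt D) (w : ℕ → V) : ℕ → ℕ → Pt D → Pt D
  | _, 0 => id
  | j, m + 1 => T (w j) (w (j + 1)) ∘ pcomp T w (j + 1) m

/-- The potential `φ(ω) = log ‖T'_{ω₀ω₁}(π(σω))‖`. -/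
def phiU {D : ℕ} {V : Type*} (T : V → V → Pt D → Pt D) (π : (ℕ → V) → Pt D)
    (ω : ℕ → V) : ℝ :=
  Real.log ‖fderiv ℝ (T (ω 0) (ω 1)) (π (fun n => ω (n + 1)))‖

/-- The potential `φ̲(ω) = log ‖T'_{ω₀ω₁}(π(σω))‖_i`. -/
def phiL {D : ℕ} {V : Type*} (T : V → V → Pt D → Pt D) (π : (ℕ → V) → Pt D)
    (ω : ℕ → V) : ℝ :=
  Real.log (inorm (fderiv ℝ (T (ω 0) (ω 1)) (π (fun n => ω (n + 1)))))

/-- Conformality condition `(G.5)_C`. -/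
def CondConf {D : ℕ} {V : Type*} (Ed : V → V → Prop) (O : V → Set (Pt D))
    (T : V → V → Pt D → Pt D) : Prop :=
  ∀ ⦃v u⦄, Ed v u → ∀ x ∈ O u, IsConformalMap (fderiv ℝ (T v u) x)

/-- Strong separation condition `(G.6)_S` relative to a limit set `K`. -/
def CondSSC {D : ℕ} {V : Type*} (Ed : V → V → Prop) (J : V → Set (Pt D))
    (T : V → V → Pt D → Pt D) (K : Set (Pt D)) : Prop :=
  ∀ ⦃v u v' u'⦄, Ed v u → Ed v' u' → (v, u) ≠ (v', u') →
    (T v u '' (J u ∩ K)) ∩ (T v' u' '' (J u' ∩ K)) = ∅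

/-- Open set condition `(G.6)_O`. -/
def CondOSC {D : ℕ} {V : Type*} (Ed : V → V → Prop) (J : V → Set (Pt D))
    (T : V → V → Pt D → Pt D) : Prop :=
  ∀ ⦃v u v' u'⦄, Ed v u → Ed v' u' → (v, u) ≠ (v', u') →
    (T v u '' interior (J u)) ∩ (T v' u' '' interior (J u')) = ∅

/-- Bounded distortion `(G.7)_B`. -/
def CondBD {D : ℕ} {V : Type*} (Ed : V → V → Prop) (O : V → Set (Pt D))
    (T : V → V → Pt D → Pt D) : Prop :=
  ∃ c > 0, ∃ β ∈ Set.Ioc (0 : ℝ) 1, ∀ ⦃v u⦄, Ed v u → ∀ x ∈ O u, ∀ y ∈ O u,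
    |‖fderiv ℝ (T v u) x‖ - ‖fderiv ℝ (T v u) y‖| ≤
      c * ‖fderiv ℝ (T v u) x‖ * dist x y ^ β

/-- Bounded distortion for inverse maps `(G.7)_{BI}`. -/
def CondBDI {D : ℕ} {V : Type*} (Ed : V → V → Prop) (O : V → Set (Pt D))
    (T : V → V → Pt D → Pt D) : Prop :=
  ∃ c > 0, ∃ β ∈ Set.Ioc (0 : ℝ) 1, ∀ ⦃v u⦄, Ed v u → ∀ x ∈ O u, ∀ y ∈ O u,
    |inorm (fderiv ℝ (T v u) x) - inorm (fderiv ℝ (T v u) y)| ≤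
      c * inorm (fderiv ℝ (T v u) x) * dist x y ^ β

/-- Contractibility of the seed sets `(G.9)_J`. -/
def CondG9 {D : ℕ} {V : Type*} (Ed : V → V → Prop) (J : V → Set (Pt D))
    (T : V → V → Pt D → Pt D) : Prop :=
  ∃ c > 0, ∀ v, Metric.diam (J v) ≤
    c * sSup {t : ℝ | ∃ u, Ed v u ∧ ∃ z ∈ J u, t = ‖fderiv ℝ (T v u) z‖}

/-- The summability interval `Ī^V` relative to the limit set `K`. -/
def IbarSet {D : ℕ} {V : Type*} (Ed : V → V → Prop) (J : V → Set (Pt D))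
    (T : V → V → Pt D → Pt D) (K : Set (Pt D)) : Set ℝ :=
  {s | 0 ≤ s ∧
    (∑' v : V, ⨆ (u : V) (_ : Ed v u) (x : Pt D) (_ : x ∈ K ∩ J u),
      ENNReal.ofReal (inorm (fderiv ℝ (T v u) x) ^ s)) ≠ ⊤}

end

noncomputable section

/-- Summability condition `(G.8)_{SV}`: some `s ∈ Ī^V` satisfies `P(s φ̲) = 0`. -/
def CondG8 {D : ℕ} {V : Type*} (Ed : V → V → Prop) (J : V → Set (Pt D))
    (T : V → V → Pt D → Pt D) (π : (ℕ → V) → Pt D) : Prop :=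
  ∃ s ∈ IbarSet Ed J T (π '' TMS Ed), pressure Ed (fun ω => s * phiL T π ω) = 0

/-- A set of vertices is strongly connected (with edges restricted to it). -/
def SCOn {V : Type*} (Ed : V → V → Prop) (C : Set V) : Prop :=
  ∀ v ∈ C, ∀ u ∈ C, Chain (restrictT Ed C) v u

/-- A strongly connected component: a maximal strongly connected set of vertices. -/
def IsSCC {V : Type*} (Ed : V → V → Prop) (C : Set V) : Prop :=
  SCOn Ed C ∧ ∀ C', C ⊆ C' → SCOn Ed C' → C' = C

end

/-! ### Connected sets and locally Lipschitz maps -/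

/-- A map that is `K`-Lipschitz at scales below `ρ` on a connected set `S` of diameter at most `R`
satisfies `dist (f x) (f y) ≤ M * K * diam S` on all of `S`, with `M` depending only on `R`, `ρ`
and the dimension. When `diam S ≥ ρ`, the interval `[0, dist (f y) (f x)]` lies in the image of
`S` under `dist (f ·) (f x)`, and that image is covered by boundedly many sets of diameter
at most `K * ρ`. -/
lemma exists_lipschitz_const {D : ℕ} (R ρ : ℝ) (hρ : 0 < ρ) :
    ∃ M : ℝ, 1 ≤ M ∧ ∀ S : Set (Pt D), IsPreconnected S → Bornology.IsBounded S →
      Metric.diam S ≤ R → ∀ f : Pt D → Pt D, ContinuousOn f S → ∀ K : ℝ, 0 ≤ K →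
      (∀ x ∈ S, ∀ y ∈ S, dist x y < ρ → dist (f x) (f y) ≤ K * dist x y) →
      ∀ x ∈ S, ∀ y ∈ S, dist (f x) (f y) ≤ M * K * Metric.diam S := by
  obtain ⟨t, -, htf, hcov⟩ := finite_cover_balls_of_compact
    (isCompact_closedBall (0 : Pt D) R) (half_pos hρ)
  refine ⟨htf.toFinset.card + 1, by simp, ?_⟩
  intro S hS hb hd f hf K hK hloc x hx y hy
  have hdn : 0 ≤ Metric.diam S := Metric.diam_nonneg
  rcases lt_or_ge (Metric.diam S) ρ with h | h
  · have h1 := Metric.dist_le_diam_of_mem hb hx hy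
    have h2 := hloc x hx y hy (h1.trans_lt h)
    have h3 := mul_le_mul_of_nonneg_left h1 hK
    have h4 : 0 ≤ (htf.toFinset.card : ℝ) * (K * Metric.diam S) := by positivity
    linarith
  · let g : Pt D → ℝ := fun z => dist (f z) (f x)
    have hg : ContinuousOn g S := fun z hz => (hf z hz).dist tendsto_const_nhds
    have hsub : Icc 0 (g y) ⊆ ⋃ p ∈ htf.toFinset, g '' (S ∩ ball (x + p) (ρ / 2)) := by
      have h1 := (hS.image g hg).ordConnected.out (mem_image_of_mem g hx) (mem_image_of_mem g hy)
      have h0 : g x = 0 := dist_self _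
      rw [h0] at h1
      intro a ha
      obtain ⟨z, hz, rfl⟩ := h1 ha
      have hzx : z - x ∈ closedBall (0 : Pt D) R := by
        rw [mem_closedBall_zero_iff, ← dist_eq_norm]
        exact (Metric.dist_le_diam_of_mem hb hz hx).trans hd
      obtain ⟨p, hp, hzp⟩ := mem_iUnion₂.1 (hcov hzx)
      refine mem_iUnion₂.2 ⟨p, htf.mem_toFinset.2 hp, z, ⟨hz, ?_⟩, rfl⟩
      rw [mem_ball, dist_eq_norm] at hzp ⊢
      convert hzp using 2
      abel
    have hpiece : ∀ p, MeasureTheory.volume (g '' (S ∩ ball (x + p) (ρ / 2))) ≤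
        ENNReal.ofReal (K * ρ) := by
      intro p
      refine (Real.volume_le_diam _).trans (Metric.ediam_le ?_)
      rintro _ ⟨z, ⟨hz, hzb⟩, rfl⟩ _ ⟨z', ⟨hz', hzb'⟩, rfl⟩
      rw [edist_dist]
      apply ENNReal.ofReal_le_ofReal
      rw [mem_ball] at hzb hzb'
      have h1 : dist z z' < ρ := by
        have := dist_triangle_right z z' (x + p)
        linarith
      calc dist (g z) (g z') ≤ dist (f z) (f z') := by
            rw [Real.dist_eq]; exact abs_dist_sub_le _ _ _
        _ ≤ K * dist z z' := hloc z hz z' hz' h1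
        _ ≤ K * ρ := by gcongr
    have hvol : ENNReal.ofReal (g y) ≤ ENNReal.ofReal (htf.toFinset.card * (K * ρ)) := by
      calc ENNReal.ofReal (g y) = MeasureTheory.volume (Icc 0 (g y)) := by simp
        _ ≤ _ := MeasureTheory.measure_mono hsub
        _ ≤ ∑ p ∈ htf.toFinset, MeasureTheory.volume (g '' (S ∩ ball (x + p) (ρ / 2))) :=
            MeasureTheory.measure_biUnion_finset_le _ _
        _ ≤ ∑ p ∈ htf.toFinset, ENNReal.ofReal (K * ρ) := Finset.sum_le_sum fun p _ => hpiece p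
        _ = _ := by
          rw [Finset.sum_const, nsmul_eq_mul,
            ENNReal.ofReal_mul (p := (htf.toFinset.card : ℝ)) (by positivity),
            ENNReal.ofReal_natCast]
    have hgy := (ENNReal.ofReal_le_ofReal_iff (by positivity)).1 hvol
    have h5 : (htf.toFinset.card : ℝ) * (K * ρ) ≤ htf.toFinset.card * (K * Metric.diam S) := by
      gcongr
    have h6 : 0 ≤ K * Metric.diam S := by positivity
    rw [dist_comm]
    change g y ≤ _
    linarith

/-! ### Compositions along a code -/

lemma shift_mem_TMS {S : Type*} {A : S → S → Prop} {ω : ℕ → S} (h : ω ∈ TMS A) :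
    shift ω ∈ TMS A := fun n => h (n + 1)

lemma shift_iterate_apply {S : Type*} (ω : ℕ → S) (n i : ℕ) :
    shift^[n] ω i = ω (i + n) := by
  induction n generalizing ω with
  | zero => rfl
  | succ n ih => rw [Function.iterate_succ_apply, ih]; rfl

lemma shift_iterate_mem_TMS {S : Type*} {A : S → S → Prop} {ω : ℕ → S} (h : ω ∈ TMS A) (n : ℕ) :
    shift^[n] ω ∈ TMS A := by
  intro i
  rw [shift_iterate_apply, shift_iterate_apply]
  have := h (i + n)
  rwa [add_right_comm] at this

lemma birkhoff_succ {S : Type*} (f : (ℕ → S) → ℝ) (n : ℕ) (ω : ℕ → S) :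
    birkhoff f (n + 1) ω = f ω + birkhoff f n (shift ω) := by
  unfold birkhoff
  rw [Finset.sum_range_succ', add_comm]
  rfl

lemma birkhoff_succ_last {S : Type*} (f : (ℕ → S) → ℝ) (n : ℕ) (ω : ℕ → S) :
    birkhoff f (n + 1) ω = birkhoff f n ω + f (shift^[n] ω) :=
  Finset.sum_range_succ _ _

lemma birkhoff_const_mul {S : Type*} (f : (ℕ → S) → ℝ) (s : ℝ) (n : ℕ) (ω : ℕ → S) :
    birkhoff (fun ω => s * f ω) n ω = s * birkhoff f n ω :=
  (Finset.mul_sum _ _ _).symm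

lemma vcomp_succ {D : ℕ} {V : Type*} (T : V → V → Pt D → Pt D) (ω : ℕ → V) (n : ℕ) :
    vcomp T ω (n + 1) = T (ω 0) (ω 1) ∘ vcomp T (shift ω) n := by
  induction n with
  | zero => rfl
  | succ n ih =>
    change vcomp T ω (n + 1) ∘ T (ω (n + 1)) (ω (n + 2)) = _
    rw [ih]
    rfl

lemma vcomp_congr {D : ℕ} {V : Type*} (T : V → V → Pt D → Pt D) {ω ω' : ℕ → V} (n : ℕ)
    (h : ∀ i ≤ n, ω i = ω' i) : vcomp T ω n = vcomp T ω' n := by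
  induction n with
  | zero => rfl
  | succ n ih =>
    change vcomp T ω n ∘ T (ω n) (ω (n + 1)) = vcomp T ω' n ∘ T (ω' n) (ω' (n + 1))
    rw [ih fun i hi => h i (hi.trans n.le_succ), h n n.le_succ, h (n + 1) le_rfl]

section
variable {D : ℕ} {V : Type*} (G : SGIFS D V)

lemma J_subset_O (v : V) : G.J v ⊆ G.O v := by
  obtain ⟨c, hc, h⟩ := G.hJO
  intro x hx
  by_contra hxO
  have := h v x hx x hxO
  rw [dist_self] at this
  linarith

lemma vcomp_mem_J {ω : ℕ → V} (hω : ω ∈ TMS G.E) (n : ℕ) {x : Pt D} (hx : x ∈ G.J (ω n)) :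
    vcomp G.T ω n x ∈ G.J (ω 0) := by
  induction n generalizing x with
  | zero => exact hx
  | succ n ih => exact ih (G.T_J (hω n) (mem_image_of_mem _ hx))

lemma vcomp_mem_O {ω : ℕ → V} (hω : ω ∈ TMS G.E) (n : ℕ) {x : Pt D} (hx : x ∈ G.O (ω n)) :
    vcomp G.T ω n x ∈ G.O (ω 0) := by
  induction n generalizing x with
  | zero => exact hx
  | succ n ih => exact ih (G.T_sub (hω n) (mem_image_of_mem _ hx))

lemma T_differentiableAt {v u : V} (h : G.E v u) {x : Pt D} (hx : x ∈ G.O u) :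
    DifferentiableAt ℝ (G.T v u) x :=
  ((G.T_diff h).differentiableOn one_ne_zero).differentiableAt ((G.O_open u).mem_nhds hx)

lemma vcomp_differentiableAt {ω : ℕ → V} (hω : ω ∈ TMS G.E) (n : ℕ) {x : Pt D}
    (hx : x ∈ G.O (ω n)) : DifferentiableAt ℝ (vcomp G.T ω n) x := by
  induction n generalizing x with
  | zero => exact differentiableAt_id
  | succ n ih =>
    exact (ih (G.T_sub (hω n) (mem_image_of_mem _ hx))).comp x (T_differentiableAt G (hω n) hx)

lemma norm_fderiv_vcomp_succ_le {ω : ℕ → V} (hω : ω ∈ TMS G.E) (n : ℕ) {x : Pt D}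
    (hx : x ∈ G.O (ω (n + 1))) :
    ‖fderiv ℝ (vcomp G.T ω (n + 1)) x‖ ≤
      ‖fderiv ℝ (G.T (ω 0) (ω 1)) (vcomp G.T (shift ω) n x)‖ *
        ‖fderiv ℝ (vcomp G.T (shift ω) n) x‖ := by
  have hs := shift_mem_TMS hω
  rw [vcomp_succ, fderiv_comp x (T_differentiableAt G (hω 0) (vcomp_mem_O G hs n hx))
    (vcomp_differentiableAt G hs n hx)]
  exact ContinuousLinearMap.opNorm_comp_le _ _

lemma r_nonneg {v u : V} (h : G.E v u) : 0 ≤ G.r := by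
  obtain ⟨x, hx⟩ := (G.O_conn u).nonempty
  exact (norm_nonneg _).trans (G.T_contr h x hx)

lemma norm_fderiv_vcomp_le_pow {ω : ℕ → V} (hω : ω ∈ TMS G.E) (n : ℕ) {x : Pt D}
    (hx : x ∈ G.O (ω n)) : ‖fderiv ℝ (vcomp G.T ω n) x‖ ≤ G.r ^ n := by
  induction n generalizing ω x with
  | zero =>
    change ‖fderiv ℝ id x‖ ≤ _
    rw [fderiv_id, pow_zero]
    exact ContinuousLinearMap.norm_id_le
  | succ n ih =>
    refine (norm_fderiv_vcomp_succ_le G hω n hx).trans ?_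
    have hs := shift_mem_TMS hω
    rw [pow_succ']
    exact mul_le_mul (G.T_contr (hω 0) _ (vcomp_mem_O G hs n hx)) (ih hs hx) (norm_nonneg _)
      (r_nonneg G (hω 0))

/-! ### The coding map -/

variable {G} {π : (ℕ → V) → Pt D}

lemma coding_mem_J (hπ : IsCodingMap G.E G.J G.T π) {ω : ℕ → V} (hω : ω ∈ TMS G.E) :
    π ω ∈ G.J (ω 0) := by
  have h : π ω ∈ ⋂ k : ℕ, vcomp G.T ω (k + 1) '' G.J (ω (k + 1)) := by
    rw [hπ ω hω]; exact mem_singleton _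
  obtain ⟨x, hx, hxe⟩ := mem_iInter.1 h 0
  rw [← hxe]
  exact vcomp_mem_J G hω 1 hx

lemma coding_shift (hπ : IsCodingMap G.E G.J G.T π) {ω : ℕ → V} (hω : ω ∈ TMS G.E) :
    G.T (ω 0) (ω 1) (π (shift ω)) = π ω := by
  have hs := shift_mem_TMS hω
  have h : π (shift ω) ∈ ⋂ k : ℕ, vcomp G.T (shift ω) (k + 1) '' G.J (shift ω (k + 1)) := by
    rw [hπ _ hs]; exact mem_singleton _
  rw [← mem_singleton_iff, ← hπ ω hω, mem_iInter]
  rintro (_ | k)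
  · exact ⟨π (shift ω), coding_mem_J hπ hs, rfl⟩
  · obtain ⟨x, hx, hxe⟩ := mem_iInter.1 h k
    refine ⟨x, hx, ?_⟩
    rw [vcomp_succ, Function.comp_apply, hxe]

lemma coding_eq_vcomp (hπ : IsCodingMap G.E G.J G.T π) {ω : ℕ → V} (hω : ω ∈ TMS G.E) (n : ℕ) :
    vcomp G.T ω n (π (shift^[n] ω)) = π ω := by
  induction n generalizing ω with
  | zero => rfl
  | succ n ih =>
    rw [vcomp_succ, Function.comp_apply, Function.iterate_succ_apply, ih (shift_mem_TMS hω),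
      coding_shift hπ hω]

lemma coding_iterate_mem_J (hπ : IsCodingMap G.E G.J G.T π) {ω : ℕ → V} (hω : ω ∈ TMS G.E)
    (n : ℕ) : π (shift^[n] ω) ∈ G.J (ω n) := by
  have := coding_mem_J hπ (shift_iterate_mem_TMS hω n)
  rwa [shift_iterate_apply, zero_add] at this

/-! ### Bounded distortion along compositions -/

/-- Uniform geometric constants: `ρ` is the room around each `J v` inside `O v`, `R` bounds the
diameters of the `J v`, and `M` turns a derivative bound near `J (ω n)` into a bound on the
oscillation of the composition over `J (ω n)` which is linear in `diam (J (ω n))`. -/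
lemma exists_geometric_constants :
    ∃ ρ M R : ℝ, 0 < ρ ∧ 1 ≤ M ∧ 0 ≤ R ∧ (∀ v, ∀ x ∈ G.J v, ball x ρ ⊆ G.O v) ∧
      (∀ v, Metric.diam (G.J v) ≤ R) ∧
      ∀ ω ∈ TMS G.E, ∀ n : ℕ, ∀ K : ℝ, 0 ≤ K →
        (∀ x ∈ G.J (ω n), ∀ z ∈ ball x ρ, ‖fderiv ℝ (vcomp G.T ω n) z‖ ≤ K) →
        ∀ x ∈ G.J (ω n), ∀ y ∈ G.J (ω n),
          dist (vcomp G.T ω n x) (vcomp G.T ω n y) ≤ M * K * Metric.diam (G.J (ω n)) := by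
  obtain ⟨ρ, hρ, hJO⟩ := G.hJO
  obtain ⟨R, hR⟩ := G.J_diam
  obtain ⟨M, hM, hMain⟩ := exists_lipschitz_const (D := D) (max R 0) ρ hρ
  have hball : ∀ v, ∀ x ∈ G.J v, ball x ρ ⊆ G.O v := by
    intro v x hx y hy
    by_contra hyO
    have := hJO v x hx y hyO
    rw [mem_ball, dist_comm] at hy
    linarith
  refine ⟨ρ, M, max R 0, hρ, hM, le_max_right _ _, hball,
    fun v => (hR v).trans (le_max_left _ _), ?_⟩
  intro ω hω n K hK hder
  refine hMain _ (G.J_conn _).isPreconnected (G.J_cpt _).isBounded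
    ((hR _).trans (le_max_left _ _)) _ ?_ K hK ?_
  · intro x hx
    exact (vcomp_differentiableAt G hω n (J_subset_O G _ hx)).continuousAt.continuousWithinAt
  · intro x hx y hy hxy
    rw [dist_comm, dist_eq_norm, dist_comm x y, dist_eq_norm y x]
    exact (convex_ball x ρ).norm_image_sub_le_of_norm_fderiv_le
      (fun z hz => vcomp_differentiableAt G hω n (hball _ x hx hz)) (hder x hx)
      (mem_ball_self hρ) (by rwa [mem_ball, dist_comm])

lemma norm_fderiv_pos [Nontrivial (Pt D)] {v u : V} (h : G.E v u) {x : Pt D} (hx : x ∈ G.O u) :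
    0 < ‖fderiv ℝ (G.T v u) x‖ :=
  norm_pos_iff.2 (G.T_unit h x hx).ne_zero

lemma exp_phiU [Nontrivial (Pt D)] (hπ : IsCodingMap G.E G.J G.T π) {ω : ℕ → V}
    (hω : ω ∈ TMS G.E) :
    Real.exp (phiU G.T π ω) = ‖fderiv ℝ (G.T (ω 0) (ω 1)) (π (shift ω))‖ :=
  Real.exp_log (norm_fderiv_pos (hω 0) (J_subset_O G _ (coding_mem_J hπ (shift_mem_TMS hω))))

/-- Derivatives of compositions near `J (ω n)` are controlled by the Birkhoff sums of `phiU`.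
The two orbits being compared approach each other like `r ^ j`, so the successive distortion
factors `1 + A * (r ^ β) ^ j` have a bounded product. -/
lemma exists_distortion_const [Nontrivial (Pt D)] (hBD : CondBD G.E G.O G.T)
    (hπ : IsCodingMap G.E G.J G.T π) {ρ M R : ℝ} (hρ : 0 < ρ) (hM : 1 ≤ M) (hR : 0 ≤ R)
    (hball : ∀ v, ∀ x ∈ G.J v, ball x ρ ⊆ G.O v) (hdiam : ∀ v, Metric.diam (G.J v) ≤ R)
    (hlip : ∀ ω ∈ TMS G.E, ∀ n : ℕ, ∀ K : ℝ, 0 ≤ K →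
        (∀ x ∈ G.J (ω n), ∀ z ∈ ball x ρ, ‖fderiv ℝ (vcomp G.T ω n) z‖ ≤ K) →
        ∀ x ∈ G.J (ω n), ∀ y ∈ G.J (ω n),
          dist (vcomp G.T ω n x) (vcomp G.T ω n y) ≤ M * K * Metric.diam (G.J (ω n))) :
    ∃ C : ℝ, 0 < C ∧ ∀ (n : ℕ), ∀ ω ∈ TMS G.E, ∀ x ∈ G.J (ω n), ∀ z ∈ ball x ρ,
      ‖fderiv ℝ (vcomp G.T ω n) z‖ ≤ C * Real.exp (birkhoff (phiU G.T π) n ω) := by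
  obtain ⟨c, hc, β, ⟨hβ, -⟩, hdist⟩ := hBD
  by_cases hne : (TMS G.E).Nonempty
  swap
  · exact ⟨1, one_pos, fun n ω hω => (hne ⟨ω, hω⟩).elim⟩
  obtain ⟨ω₀, hω₀⟩ := hne
  have hr0 : 0 ≤ G.r := r_nonneg G (hω₀ 0)
  set L : ℝ := ρ + M * R with hL
  have hL0 : 0 ≤ L := by positivity
  set A : ℝ := c * L ^ β with hA
  have hA0 : 0 ≤ A := by positivity
  set q : ℝ := G.r ^ β with hq
  have hq0 : 0 ≤ q := Real.rpow_nonneg hr0 _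
  have hq1 : q < 1 := Real.rpow_lt_one hr0 G.hr hβ
  have key : ∀ (n : ℕ), ∀ ω ∈ TMS G.E, ∀ x ∈ G.J (ω n), ∀ z ∈ ball x ρ,
      ‖fderiv ℝ (vcomp G.T ω n) z‖ ≤
        Real.exp (A * ∑ j ∈ Finset.range n, q ^ j) * Real.exp (birkhoff (phiU G.T π) n ω) := by
    intro n
    induction n with
    | zero =>
      intro ω hω x hx z hz
      have := norm_fderiv_vcomp_le_pow G hω 0 (hball _ x hx hz)
      simpa [birkhoff] using this
    | succ n ih =>
      intro ω hω x hx z hz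
      have hs := shift_mem_TMS hω
      have hzO : z ∈ G.O (shift ω n) := hball _ x hx hz
      have hstep := norm_fderiv_vcomp_succ_le G hω n hzO
      have ih' := ih (shift ω) hs x hx z hz
      have hyJ : π (shift^[n] (shift ω)) ∈ G.J (shift ω n) := coding_iterate_mem_J hπ hs n
      have hye := coding_eq_vcomp hπ hs n
      have hd1 : dist (vcomp G.T (shift ω) n z) (vcomp G.T (shift ω) n x) ≤ G.r ^ n * ρ := by
        rw [dist_eq_norm]
        refine ((convex_ball x ρ).norm_image_sub_le_of_norm_fderiv_le (C := G.r ^ n)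
          (fun z hz => vcomp_differentiableAt G hs n (hball _ x hx hz))
          (fun z hz => norm_fderiv_vcomp_le_pow G hs n (hball _ x hx hz))
          (mem_ball_self hρ) hz).trans ?_
        rw [← dist_eq_norm]
        gcongr
        exact (mem_ball.1 hz).le
      have hd2 : dist (vcomp G.T (shift ω) n x) (π (shift ω)) ≤ M * G.r ^ n * R := by
        rw [← hye]
        refine (hlip (shift ω) hs n (G.r ^ n) (by positivity)
          (fun x hx z hz => norm_fderiv_vcomp_le_pow G hs n (hball _ x hx hz)) x hx _ hyJ).trans ?_
        gcongr
        exact hdiam _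
      have hd : dist (π (shift ω)) (vcomp G.T (shift ω) n z) ≤ L * G.r ^ n := by
        rw [dist_comm]
        refine (dist_triangle _ _ _).trans ((add_le_add hd1 hd2).trans (le_of_eq ?_))
        rw [hL]; ring
      have hpow : dist (π (shift ω)) (vcomp G.T (shift ω) n z) ^ β ≤ L ^ β * q ^ n := by
        refine (Real.rpow_le_rpow dist_nonneg hd hβ.le).trans (le_of_eq ?_)
        rw [Real.mul_rpow hL0 (by positivity), hq, Real.rpow_pow_comm hr0]
      have hyO : π (shift ω) ∈ G.O (ω 1) := J_subset_O G _ (coding_mem_J hπ hs)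
      have hT : ‖fderiv ℝ (G.T (ω 0) (ω 1)) (vcomp G.T (shift ω) n z)‖ ≤
          Real.exp (A * q ^ n) * Real.exp (phiU G.T π ω) := by
        have h1 := hdist (hω 0) _ hyO _ (vcomp_mem_O G hs n hzO)
        have h2 := (abs_le.1 h1).1
        rw [exp_phiU hπ hω]
        have h3 : 1 + A * q ^ n ≤ Real.exp (A * q ^ n) := by
          rw [add_comm]; exact Real.add_one_le_exp _
        calc _ ≤ ‖fderiv ℝ (G.T (ω 0) (ω 1)) (π (shift ω))‖ +
              c * ‖fderiv ℝ (G.T (ω 0) (ω 1)) (π (shift ω))‖ *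
                dist (π (shift ω)) (vcomp G.T (shift ω) n z) ^ β := by linarith
          _ ≤ ‖fderiv ℝ (G.T (ω 0) (ω 1)) (π (shift ω))‖ +
              c * ‖fderiv ℝ (G.T (ω 0) (ω 1)) (π (shift ω))‖ * (L ^ β * q ^ n) := by gcongr
          _ = (1 + A * q ^ n) * ‖fderiv ℝ (G.T (ω 0) (ω 1)) (π (shift ω))‖ := by rw [hA]; ring
          _ ≤ _ := by gcongr
      refine hstep.trans ((mul_le_mul hT ih' (norm_nonneg _) (by positivity)).trans (le_of_eq ?_))
      rw [birkhoff_succ, Finset.sum_range_succ, mul_add, Real.exp_add, Real.exp_add]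
      ring
  refine ⟨Real.exp (A * (1 - q)⁻¹), Real.exp_pos _, fun n ω hω x hx z hz =>
    (key n ω hω x hx z hz).trans ?_⟩
  gcongr
  rw [← tsum_geometric_of_lt_one hq0 hq1]
  exact (summable_geometric_of_lt_one hq0 hq1).sum_le_tsum _ fun i _ => pow_nonneg hq0 i

/-! ### Consequences of contractibility -/

lemma diam_J_pos [Nontrivial (Pt D)] (v : V) : 0 < Metric.diam (G.J v) := by
  have hne : (interior (G.J v)).Nonempty := by
    rw [← closure_nonempty_iff, ← G.J_reg v]
    exact (G.J_conn v).nonempty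
  obtain ⟨x, hx⟩ := hne
  have : NeBot (𝓝[≠] x) := Module.punctured_nhds_neBot ℝ (Pt D) x
  exact Metric.diam_pos (infinite_of_mem_nhds x (mem_interior_iff_mem_nhds.1 hx)).nontrivial
    (G.J_cpt v).isBounded

/-- Since `diam (J v) > 0`, contractibility forces every vertex to have an outgoing edge (the
supremum over the empty set is `0`), and an edge nearly realising the supremum exists. -/
lemma exists_edge_of_contractible [Nontrivial (Pt D)] (hG9 : CondG9 G.E G.J G.T) :
    ∃ c : ℝ, 0 < c ∧ ∀ v, ∃ u, G.E v u ∧ ∃ z ∈ G.J u,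
      Metric.diam (G.J v) ≤ c * ‖fderiv ℝ (G.T v u) z‖ := by
  obtain ⟨c, hc, h⟩ := hG9
  refine ⟨2 * c, by positivity, fun v => ?_⟩
  have hpos := diam_J_pos (G := G) v
  have hv := h v
  set S := {t : ℝ | ∃ u, G.E v u ∧ ∃ z ∈ G.J u, t = ‖fderiv ℝ (G.T v u) z‖}
  have hne : S.Nonempty := by
    by_contra hne
    rw [not_nonempty_iff_eq_empty] at hne
    rw [hne, Real.sSup_empty, mul_zero] at hv
    linarith
  have hlt : Metric.diam (G.J v) / (2 * c) < sSup S := by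
    rw [div_lt_iff₀ (by positivity)]
    linarith
  obtain ⟨_, ⟨u, hvu, z, hz, rfl⟩, hzlt⟩ := exists_lt_of_lt_csSup hne hlt
  refine ⟨u, hvu, z, hz, ?_⟩
  rw [div_lt_iff₀ (by positivity)] at hzlt
  linarith

lemma exists_code_of_forall_exists_edge {S : Type*} {A : S → S → Prop} (h : ∀ v, ∃ u, A v u)
    (v : S) : ∃ ω ∈ TMS A, ω 0 = v := by
  choose f hf using h
  refine ⟨fun n => f^[n] v, fun n => ?_, rfl⟩
  simp only [Function.iterate_succ_apply']
  exact hf _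

lemma exists_code_extension {S : Type*} {A : S → S → Prop} (h : ∀ v, ∃ u, A v u)
    {ω : ℕ → S} (hω : ω ∈ TMS A) (n : ℕ) {u : S} (hu : A (ω n) u) :
    ∃ ω' ∈ TMS A, (∀ i ≤ n, ω' i = ω i) ∧ ω' (n + 1) = u := by
  obtain ⟨η, hη, rfl⟩ := exists_code_of_forall_exists_edge h u
  refine ⟨fun i => if i ≤ n then ω i else η (i - (n + 1)), fun i => ?_, fun i hi => if_pos hi, ?_⟩
  · rcases lt_trichotomy i n with hi | rfl | hi
    · simp only [if_pos hi.le, if_pos (Nat.succ_le_of_lt hi)]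
      exact hω i
    · simpa using hu
    · have h1 : ¬ i ≤ n := by omega
      have h2 : ¬ i + 1 ≤ n := by omega
      have h3 : i + 1 - (n + 1) = i - (n + 1) + 1 := by omega
      simp only [if_neg h1, if_neg h2, h3]
      exact hη _
  · simp

/-! ### Diameters of coded pieces and the partition function -/

/-- The piece of the limit set coded by a word of length `n + 1` has diameter at most a constant
times `exp (S_{n+1} φ)` at some code in the cylinder. That code leaves the last letter `v` of the
word along the edge given by `exists_edge_of_contractible`, whose derivative dominates
`diam (J v)` and so accounts for the last of the `n + 1` factors. -/
lemma exists_piece_bound [Nontrivial (Pt D)] (hBD : CondBD G.E G.O G.T)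
    (hG9 : CondG9 G.E G.J G.T) (hπ : IsCodingMap G.E G.J G.T π) :
    ∃ C : ℝ, 0 < C ∧ ∀ (n : ℕ) (w : Fin (n + 1) → V), (cylSet G.E (n + 1) w).Nonempty →
      ∃ ω ∈ cylSet G.E (n + 1) w, ediam (π '' cylSet G.E (n + 1) w) ≤
        ENNReal.ofReal (C * Real.exp (birkhoff (phiU G.T π) (n + 1) ω)) := by
  obtain ⟨ρ, M, R, hρ, hM, hR, hball, hdiam, hlip⟩ := exists_geometric_constants (G := G)
  obtain ⟨C, hC, hCd⟩ := exists_distortion_const hBD hπ hρ hM hR hball hdiam hlip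
  obtain ⟨c, hc, hedge⟩ := exists_edge_of_contractible hG9
  obtain ⟨c₀, hc₀, β, ⟨hβ, -⟩, hdist⟩ := hBD
  have hM0 : 0 < M := by linarith
  refine ⟨M * C * c * (1 + c₀ * R ^ β), by positivity, ?_⟩
  rintro n w ⟨ω₁, hω₁, hw₁⟩
  obtain ⟨u, hu, z, hz, hdz⟩ := hedge (ω₁ n)
  obtain ⟨ω, hω, hag, hωu⟩ :=
    exists_code_extension (fun v => (hedge v).imp fun u h => h.1) hω₁ n hu
  have hωw : ∀ i : Fin (n + 1), ω i = w i := fun i => by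
    rw [hag i (Nat.lt_succ_iff.1 i.2), hw₁ i]
  refine ⟨ω, ⟨hω, hωw⟩, Metric.ediam_le ?_⟩
  -- Every point of the piece is the image under the same composition of a point of `J (ω n)`.
  have hrep : ∀ η ∈ cylSet G.E (n + 1) w, ∃ y ∈ G.J (ω n), vcomp G.T ω n y = π η := by
    rintro η ⟨hη, hηw⟩
    have hηω : ∀ i ≤ n, ω i = η i := fun i hi => by
      have h1 := hωw ⟨i, Nat.lt_succ_of_le hi⟩
      have h2 := hηw ⟨i, Nat.lt_succ_of_le hi⟩
      exact h1.trans h2.symm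
    refine ⟨π (shift^[n] η), ?_, ?_⟩
    · rw [hηω n le_rfl]; exact coding_iterate_mem_J hπ hη n
    · rw [vcomp_congr G.T n hηω]; exact coding_eq_vcomp hπ hη n
  rintro _ ⟨η, hη, rfl⟩ _ ⟨η', hη', rfl⟩
  obtain ⟨y, hy, hye⟩ := hrep η hη
  obtain ⟨y', hy', hye'⟩ := hrep η' hη'
  rw [← hye, ← hye', edist_dist]
  apply ENNReal.ofReal_le_ofReal
  have h1 := hlip ω hω n (C * Real.exp (birkhoff (phiU G.T π) n ω)) (by positivity)
    (hCd n ω hω) y hy y' hy'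
  have hpJ : π (shift^[n + 1] ω) ∈ G.J u := by
    rw [← hωu]; exact coding_iterate_mem_J hπ hω (n + 1)
  have hphi : Real.exp (phiU G.T π (shift^[n] ω)) =
      ‖fderiv ℝ (G.T (ω₁ n) u) (π (shift^[n + 1] ω))‖ := by
    rw [exp_phiU hπ (shift_iterate_mem_TMS hω n), shift_iterate_apply, shift_iterate_apply,
      zero_add, add_comm 1 n, hωu, hag n le_rfl, ← Function.iterate_succ_apply' shift]
  have hz' : ‖fderiv ℝ (G.T (ω₁ n) u) z‖ ≤
      (1 + c₀ * R ^ β) * Real.exp (phiU G.T π (shift^[n] ω)) := by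
    rw [hphi]
    have h2 := (abs_le.1 (hdist hu _ (J_subset_O G _ hpJ) z (J_subset_O G _ hz))).1
    have h3 : dist (π (shift^[n + 1] ω)) z ^ β ≤ R ^ β :=
      Real.rpow_le_rpow dist_nonneg
        ((Metric.dist_le_diam_of_mem (G.J_cpt u).isBounded hpJ hz).trans (hdiam u)) hβ.le
    have h4 : c₀ * ‖fderiv ℝ (G.T (ω₁ n) u) (π (shift^[n + 1] ω))‖ *
        dist (π (shift^[n + 1] ω)) z ^ β ≤
        c₀ * ‖fderiv ℝ (G.T (ω₁ n) u) (π (shift^[n + 1] ω))‖ * R ^ β := by gcongr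
    linarith
  have hdJ : Metric.diam (G.J (ω n)) ≤
      c * ((1 + c₀ * R ^ β) * Real.exp (phiU G.T π (shift^[n] ω))) := by
    rw [hag n le_rfl]
    exact hdz.trans (by gcongr)
  calc _ ≤ _ := h1
    _ ≤ M * (C * Real.exp (birkhoff (phiU G.T π) n ω)) *
        (c * ((1 + c₀ * R ^ β) * Real.exp (phiU G.T π (shift^[n] ω)))) := by gcongr
    _ = _ := by rw [birkhoff_succ_last, Real.exp_add]; ring

/-- Every derivative has norm at most `r`. -/
lemma exp_birkhoff_le_pow [Nontrivial (Pt D)] (hπ : IsCodingMap G.E G.J G.T π) {ω : ℕ → V}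
    (hω : ω ∈ TMS G.E) (n : ℕ) : Real.exp (birkhoff (phiU G.T π) n ω) ≤ G.r ^ n := by
  induction n generalizing ω with
  | zero => simp [birkhoff]
  | succ n ih =>
    have hs := shift_mem_TMS hω
    rw [birkhoff_succ, Real.exp_add, exp_phiU hπ hω, pow_succ']
    exact mul_le_mul (G.T_contr (hω 0) _ (J_subset_O G _ (coding_mem_J hπ hs))) (ih hs)
      (Real.exp_pos _).le (r_nonneg G (hω 0))

/-- `Z_n(sφ) ≤ r ^ ((s - s₀) n) Z_n(s₀φ)`, since every derivative has norm at most `r`. -/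
lemma pressureZ_le_mul [Nontrivial (Pt D)] (hπ : IsCodingMap G.E G.J G.T π) (hr : 0 < G.r)
    {s₀ s : ℝ} (hs : s₀ ≤ s) (n : ℕ) :
    pressureZ G.E (fun ω => s * phiU G.T π ω) n ≤
      ENNReal.ofReal (Real.exp ((s - s₀) * (n * Real.log G.r))) *
        pressureZ G.E (fun ω => s₀ * phiU G.T π ω) n := by
  unfold pressureZ
  rw [← ENNReal.tsum_mul_left]
  refine ENNReal.tsum_le_tsum fun w => iSup₂_le fun ω hω => ?_
  have hb : birkhoff (phiU G.T π) n ω ≤ n * Real.log G.r := by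
    rw [← Real.exp_le_exp, mul_comm, Real.exp_mul, Real.exp_log hr, Real.rpow_natCast]
    exact exp_birkhoff_le_pow hπ hω.1 n
  have hle : ENNReal.ofReal (Real.exp (birkhoff (fun ω => s * phiU G.T π ω) n ω)) ≤
      ENNReal.ofReal (Real.exp ((s - s₀) * (n * Real.log G.r))) *
        ENNReal.ofReal (Real.exp (birkhoff (fun ω => s₀ * phiU G.T π ω) n ω)) := by
    rw [← ENNReal.ofReal_mul (Real.exp_pos _).le, ← Real.exp_add, birkhoff_const_mul,
      birkhoff_const_mul]
    apply ENNReal.ofReal_le_ofReal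
    rw [Real.exp_le_exp]
    have := mul_le_mul_of_nonneg_left hb (sub_nonneg.2 hs)
    linarith
  refine hle.trans ?_
  gcongr
  exact le_iSup₂_of_le ω hω le_rfl

lemma eventually_pressureZ_le {S : Type*} {A : S → S → Prop} {f : (ℕ → S) → ℝ}
    (h : pressure A f ≤ 0) {δ : ℝ} (hδ : 0 < δ) :
    ∀ᶠ n : ℕ in atTop, pressureZ A f n ≤ ENNReal.ofReal (Real.exp (n * δ)) := by
  have hlt : pressure A f < (δ : EReal) := h.trans_lt (by exact_mod_cast hδ)
  filter_upwards [eventually_lt_of_limsup_lt hlt, eventually_gt_atTop 0] with n hn hn0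
  have hn' : (0 : ℝ) < n := by exact_mod_cast hn0
  unfold elog at hn
  split_ifs at hn with h0 htop
  · rw [h0]; exact zero_le
  · exfalso
    rw [← EReal.coe_inv, EReal.coe_mul_top_of_pos (by positivity)] at hn
    exact not_top_lt hn
  · rw [← EReal.coe_inv, ← EReal.coe_mul, EReal.coe_lt_coe_iff, inv_mul_lt_iff₀ hn'] at hn
    rw [← ENNReal.ofReal_toReal htop]
    apply ENNReal.ofReal_le_ofReal
    exact (Real.log_le_iff_le_exp (ENNReal.toReal_pos h0 htop)).1 hn.le

/-! ### The dimension bound -/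

lemma dimH_le_of_pressure_nonpos [Countable V] [Nontrivial (Pt D)] (hBD : CondBD G.E G.O G.T)
    (hG9 : CondG9 G.E G.J G.T) (hπ : IsCodingMap G.E G.J G.T π) {s₀ : ℝ} (hs₀ : 0 ≤ s₀)
    (hP : pressure G.E (fun ω => s₀ * phiU G.T π ω) ≤ 0) :
    dimH (π '' TMS G.E) ≤ ENNReal.ofReal s₀ := by
  rcases (TMS G.E).eq_empty_or_nonempty with hemp | ⟨ω₀, hω₀⟩
  · rw [hemp, image_empty, dimH_empty]; exact zero_le
  have hr : 0 < G.r := by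
    have hx := J_subset_O G _ (coding_mem_J hπ (shift_mem_TMS hω₀))
    exact (norm_fderiv_pos (hω₀ 0) hx).trans_le (G.T_contr (hω₀ 0) _ hx)
  obtain ⟨C, hC, hpiece⟩ := exists_piece_bound hBD hG9 hπ
  refine le_of_forall_gt fun a ha => ?_
  obtain ⟨s, -, hs₀s, hsa⟩ : ∃ s : ℝ, 0 ≤ s ∧ ENNReal.ofReal s₀ < ENNReal.ofReal s ∧
      ENNReal.ofReal s < a := by
    obtain ⟨b, hb1, hb2⟩ := exists_between ha
    refine ⟨b.toReal, ENNReal.toReal_nonneg, ?_, ?_⟩ <;>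
      rwa [ENNReal.ofReal_toReal hb2.ne_top]
  have hs : s₀ < s := by
    by_contra hcon
    exact absurd (ENNReal.ofReal_le_ofReal (not_lt.1 hcon)) (not_le.2 hs₀s)
  have hspos : 0 < s := hs₀.trans_lt hs
  refine lt_of_le_of_lt ?_ hsa
  have hlog : Real.log G.r < 0 := Real.log_neg hr G.hr
  -- The Birkhoff sums decay linearly, so the excess `s - s₀` absorbs subexponential growth.
  have hδ : 0 < (s - s₀) * -Real.log G.r := mul_pos (sub_pos.2 hs) (neg_pos.2 hlog)
  have hZ : ∀ᶠ n : ℕ in atTop, pressureZ G.E (fun ω => s * phiU G.T π ω) n ≤ 1 := by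
    filter_upwards [eventually_pressureZ_le hP hδ] with n hn
    refine (pressureZ_le_mul hπ hr hs.le n).trans ?_
    refine (mul_le_mul_right hn _).trans ?_
    rw [← ENNReal.ofReal_mul (Real.exp_pos _).le, ← Real.exp_add]
    have : (s - s₀) * (n * Real.log G.r) + n * ((s - s₀) * -Real.log G.r) = 0 := by ring
    rw [this, Real.exp_zero, ENNReal.ofReal_one]
  have hZ' : ∀ᶠ n : ℕ in atTop, pressureZ G.E (fun ω => s * phiU G.T π ω) (n + 1) ≤ 1 :=
    (tendsto_add_atTop_nat 1).eventually hZ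
  have hpiece_s : ∀ (n : ℕ) (w : Fin (n + 1) → V), ediam (π '' cylSet G.E (n + 1) w) ^ s ≤
      ENNReal.ofReal C ^ s * ⨆ ω ∈ cylSet G.E (n + 1) w, ENNReal.ofReal
        (Real.exp (birkhoff (fun ω => s * phiU G.T π ω) (n + 1) ω)) := by
    intro n w
    rcases (cylSet G.E (n + 1) w).eq_empty_or_nonempty with hemp | hne
    · rw [hemp, image_empty, ediam_empty, ENNReal.zero_rpow_of_pos hspos]; exact zero_le
    · obtain ⟨ω, hω, hle⟩ := hpiece n w hne
      refine (ENNReal.rpow_le_rpow hle hspos.le).trans ?_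
      rw [ENNReal.ofReal_mul hC.le, ENNReal.mul_rpow_of_nonneg _ _ hspos.le]
      gcongr
      refine le_iSup₂_of_le ω hω (le_of_eq ?_)
      rw [ENNReal.ofReal_rpow_of_pos (Real.exp_pos _), ← Real.exp_mul, birkhoff_const_mul,
        mul_comm]
  have hsum : ∀ n : ℕ, ∑' w : Fin (n + 1) → V, ediam (π '' cylSet G.E (n + 1) w) ^ s ≤
      ENNReal.ofReal C ^ s * pressureZ G.E (fun ω => s * phiU G.T π ω) (n + 1) := by
    intro n
    rw [pressureZ, ← ENNReal.tsum_mul_left]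
    exact ENNReal.tsum_le_tsum (hpiece_s n)
  have hmesh : ∀ (n : ℕ) (w : Fin (n + 1) → V), ediam (π '' cylSet G.E (n + 1) w) ≤
      ENNReal.ofReal (C * G.r ^ (n + 1)) := by
    intro n w
    rcases (cylSet G.E (n + 1) w).eq_empty_or_nonempty with hemp | hne
    · rw [hemp, image_empty, ediam_empty]; exact zero_le
    · obtain ⟨ω, hω, hle⟩ := hpiece n w hne
      refine hle.trans (ENNReal.ofReal_le_ofReal ?_)
      gcongr
      exact exp_birkhoff_le_pow hπ hω.1 (n + 1)
  have hmesh0 : Tendsto (fun n : ℕ => ENNReal.ofReal (C * G.r ^ (n + 1))) atTop (𝓝 0) := by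
    have h1 : Tendsto (fun n : ℕ => C * G.r ^ (n + 1)) atTop (𝓝 (C * 0)) :=
      ((tendsto_pow_atTop_nhds_zero_of_lt_one hr.le G.hr).comp
        (tendsto_add_atTop_nat 1)).const_mul C
    have h2 := ENNReal.tendsto_ofReal h1
    rwa [mul_zero, ENNReal.ofReal_zero] at h2
  have hcover : ∀ n : ℕ, π '' TMS G.E ⊆
      ⋃ w : Fin (n + 1) → V, π '' cylSet G.E (n + 1) w := by
    rintro n _ ⟨ω, hω, rfl⟩
    exact mem_iUnion.2 ⟨fun i => ω i, ω, ⟨hω, fun i => rfl⟩, rfl⟩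
  have hfin : MeasureTheory.Measure.hausdorffMeasure s (π '' TMS G.E) ≤ ENNReal.ofReal C ^ s := by
    refine (MeasureTheory.Measure.hausdorffMeasure_le_liminf_tsum s _ _ hmesh0
      (fun n (w : Fin (n + 1) → V) => π '' cylSet G.E (n + 1) w)
      (Eventually.of_forall hmesh) (Eventually.of_forall hcover)).trans ?_
    refine liminf_le_of_frequently_le' (Eventually.frequently ?_)
    filter_upwards [hZ'] with n hn
    refine (hsum n).trans ((mul_le_mul_right hn _).trans (le_of_eq (mul_one _)))
  have hne :
      MeasureTheory.Measure.hausdorffMeasure ((s.toNNReal : ℝ≥0) : ℝ) (π '' TMS G.E) ≠ ⊤ := by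
    rw [Real.coe_toNNReal s hspos.le]
    exact (hfin.trans_lt (ENNReal.rpow_lt_top_of_nonneg hspos.le ENNReal.ofReal_ne_top)).ne
  exact dimH_le_of_hausdorffMeasure_ne_top hne

end

/-- Upper estimate for an arbitrary simple GIFS under `(G.7)_B` and
`(G.9)_J`: `dim_H K ≤ max (s̄, c*)`. -/
theorem dimH_limit_set_le_max
    {D : ℕ} {V : Type*} [Countable V] (G : SGIFS D V)
    (hBD : CondBD G.E G.O G.T)
    (hG9 : CondG9 G.E G.J G.T)
    (π : (ℕ → V) → Pt D) (hπ : IsCodingMap G.E G.J G.T π) :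
    dimH (π '' TMS G.E) ≤
      max
        (⨅ (s : ℝ) (_ : 0 ≤ s)
          (_ : pressure G.E (fun ω => s * phiU G.T π ω) ≤ (0 : EReal)),
          ENNReal.ofReal s)
        (⨅ (s : ℝ) (_ : 0 ≤ s)
          (_ : (∑' v : V, ⨆ (u : V) (_ : G.E v u) (x : Pt D)
              (_ : x ∈ (π '' TMS G.E) ∩ G.J u),
              ENNReal.ofReal (‖fderiv ℝ (G.T v u) x‖ ^ s)) ≠ ⊤),
          ENNReal.ofReal s) := by
  refine le_trans ?_ (le_max_left _ _)
  refine le_iInf fun s => le_iInf fun hs => le_iInf fun hP => ?_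
  rcases subsingleton_or_nontrivial (Pt D) with hsub | hnt
  · rw [(subsingleton_of_subsingleton (s := π '' TMS G.E)).dimH_zero]
    exact zero_le
  · exact dimH_le_of_pressure_nonpos hBD hG9 hπ hs hP
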